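/- arXiv:math/0501254 — 2 statements merged into one kernel-verified Lean document; each statement's English description precedes it below -/
import Mathlib

section
/- Let n ≥ 2 be an integer and F a field whose multiplicative group F^× contains an element ζ of order n. Then there exists an action of the group (ℤ/nℤ)² by F-algebra automorphisms on the matrix algebra M_n(F) such that the inclusion F → M_n(F) (as scalar matrices) is a (ℤ/nℤ)²-Galois-Azumaya extension. -/
open scoped TensorProduct

namespace Nuss
noncomputable section

variable {R : Type*} [CommRing R] {S : Type*} [Ring S] [Algebra R S]
variable {G : Type*} [Group G]

/-- The Galois map `Γ : S ⊗[R] S →ₗ[R] Map(G,S)`, `Γ(s ⊗ t)(g) = s⬝g(t)`, for a centralizing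
extension, i.e. an `R`-algebra `S`, with `G` acting by `R`-algebra automorphisms. -/
def gammaAlg (act : G →* (S ≃ₐ[R] S)) : S ⊗[R] S →ₗ[R] (G → S) :=
  TensorProduct.lift <| LinearMap.mk₂ R (fun s t => fun g => s * act g t)
    (fun s s' t => by funext g; simp [add_mul])
    (fun c s t => by funext g; simp [Algebra.smul_mul_assoc])
    (fun s t t' => by funext g; simp [map_add, mul_add])
    (fun c s t => by funext g; simp [map_smul, Algebra.mul_smul_comm])

@[simp] lemma gammaAlg_tmul (act : G →* (S ≃ₐ[R] S)) (s t : S) :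
    gammaAlg act (s ⊗ₜ[R] t) = fun g => s * act g t := rfl

/-- The function `δ_e ∈ Map(G, S)`: `1` at the neutral element, `0` elsewhere. -/
def deltaE' (G S : Type*) [Group G] [Ring S] : G → S :=
  fun g => letI := Classical.decEq G; if g = 1 then 1 else 0

/-- A centralizing `G`-Galois extension: `S` is an `R`-algebra (so that the structure morphism
`ψ = algebraMap R S` lands in the centre of `S`), the finite group `G` acts on `S` by
`R`-algebra automorphisms (equivalently, by ring automorphisms fixing `ψ(R)` pointwise),
`S` is a faithfully flat `R`-module via `ψ`, and the Galois map is bijective. -/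
structure IsCentralizingGaloisExtension (G : Type*) [Group G] [Finite G]
    (R S : Type*) [CommRing R] [Ring S] [Algebra R S] (act : G →* (S ≃ₐ[R] S)) : Prop where
  faithfullyFlat : Module.FaithfullyFlat R S
  bijective : Function.Bijective (gammaAlg act)

/-- A central extension: the structure morphism maps `R` bijectively onto the centre of `S`. -/
def IsCentralExtension (R S : Type*) [CommRing R] [Ring S] [Algebra R S] : Prop :=
  Function.Injective (algebraMap R S) ∧ (algebraMap R S).range = Subring.center S

/-- A separable extension: the multiplication `μ : S ⊗[R] S → S` splits as a morphism of
`S`-bimodules; equivalently there is a Casimir element `η` with `μ(η) = 1`. -/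
def IsSeparableExtension (R S : Type*) [CommRing R] [Ring S] [Algebra R S] : Prop :=
  ∃ η : S ⊗[R] S, (∀ s : S, (s ⊗ₜ[R] (1 : S)) * η = η * ((1 : S) ⊗ₜ[R] s)) ∧
    LinearMap.mul' R S η = 1

/-- A `G`-Galois-Azumaya extension: a central `G`-Galois extension `R → S` such that `S` is
an Azumaya (central separable) `R`-algebra. -/
def IsGaloisAzumayaExtension (G : Type*) [Group G] [Finite G]
    (R S : Type*) [CommRing R] [Ring S] [Algebra R S] (act : G →* (S ≃ₐ[R] S)) : Prop :=
  IsCentralizingGaloisExtension G R S act ∧ IsCentralExtension R S ∧ IsSeparableExtension R S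

end
end Nuss

namespace Nuss
noncomputable section

/-!
Every function `G → S` is a left `S`-combination of translates of `δ_e`, so `Γ` is surjective once
it attains `δ_e`, and bijective if moreover the ranks agree; `Γ⁻¹(δ_e)` is then automatically a
separability idempotent. For `M_ι(R)` the candidate is `|ι|⁻¹ ∑ e_ij ⊗ e_ji`: since
`∑ e_ij M e_ji = tr M • 1`, it is sent to `δ_e` whenever every `g ≠ 1` acts as conjugation by a
traceless unit. The Weyl matrices (characters times translations) of `ℤ/n` form such a family,
because a nontrivial character sums to zero and a nontrivial translation has no fixed point.
-/

open Matrix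

section Galois

variable {R : Type*} [CommRing R] {S : Type*} [Ring S] [Algebra R S] {G : Type*} [Group G]

lemma deltaE'_one : deltaE' G S 1 = 1 := if_pos rfl

lemma deltaE'_of_ne {g : G} (hg : g ≠ 1) : deltaE' G S g = 0 := if_neg hg

lemma gammaAlg_tmul_one_mul (act : G →* (S ≃ₐ[R] S)) (s : S) (x : S ⊗[R] S) (g : G) :
    gammaAlg act ((s ⊗ₜ 1) * x) g = s * gammaAlg act x g := by
  induction x with
  | zero => simp
  | tmul a b => simp [mul_assoc]
  | add x y hx hy => simp only [mul_add, map_add, Pi.add_apply, hx, hy]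

lemma gammaAlg_mul_one_tmul (act : G →* (S ≃ₐ[R] S)) (x : S ⊗[R] S) (t : S) (g : G) :
    gammaAlg act (x * (1 ⊗ₜ t)) g = gammaAlg act x g * act g t := by
  induction x with
  | zero => simp
  | tmul a b => simp [mul_assoc]
  | add x y hx hy => simp only [add_mul, map_add, Pi.add_apply, hx, hy]

lemma gammaAlg_lTensor_act (act : G →* (S ≃ₐ[R] S)) (x : S ⊗[R] S) (g k : G) :
    gammaAlg act ((act k).toLinearMap.lTensor S x) g = gammaAlg act x (g * k) := by
  induction x with
  | zero => simp
  | tmul a b => simp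
  | add x y hx hy => simp only [map_add, Pi.add_apply, hx, hy]

lemma gammaAlg_apply_one (act : G →* (S ≃ₐ[R] S)) (x : S ⊗[R] S) :
    gammaAlg act x 1 = LinearMap.mul' R S x := by
  induction x with
  | zero => simp
  | tmul a b => simp
  | add x y hx hy => simp only [map_add, Pi.add_apply, hx, hy]

lemma gammaAlg_surjective_of_eq_deltaE' [Finite G] {act : G →* (S ≃ₐ[R] S)} {η : S ⊗[R] S}
    (hη : gammaAlg act η = deltaE' G S) : Function.Surjective (gammaAlg act) := by
  have := Fintype.ofFinite G
  intro f
  refine ⟨∑ k, (f k ⊗ₜ 1) * (act k⁻¹).toLinearMap.lTensor S η, funext fun g => ?_⟩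
  simp only [map_sum, Finset.sum_apply, gammaAlg_tmul_one_mul, gammaAlg_lTensor_act, hη]
  rw [Finset.sum_eq_single g]
  · rw [mul_inv_cancel, deltaE'_one, mul_one]
  · intro k _ hk
    rw [deltaE'_of_ne (mt mul_inv_eq_one.mp hk.symm), mul_zero]
  · simp

lemma gammaAlg_bijective_of_eq_deltaE' [Nontrivial R] [Module.Free R S] [Module.Finite R S]
    [Finite G] {act : G →* (S ≃ₐ[R] S)} (hrank : Module.finrank R S = Nat.card G) {η : S ⊗[R] S}
    (hη : gammaAlg act η = deltaE' G S) : Function.Bijective (gammaAlg act) := by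
  have := Fintype.ofFinite G
  have hrank' : Module.finrank R (S ⊗[R] S) = Module.finrank R (G → S) := by
    simp [Module.finrank_tensorProduct, Module.finrank_pi_fintype, hrank]
  have hsurj := gammaAlg_surjective_of_eq_deltaE' hη
  exact ⟨OrzechProperty.injective_of_surjective_of_injective
    (LinearEquiv.ofFinrankEq _ _ hrank').toLinearMap _ (LinearEquiv.injective _) hsurj, hsurj⟩

namespace IsCentralizingGaloisExtension

variable [Finite G] {act : G →* (S ≃ₐ[R] S)}

lemma isSeparableExtension (h : IsCentralizingGaloisExtension G R S act) :
    IsSeparableExtension R S := by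
  obtain ⟨η, hη⟩ := h.bijective.surjective (deltaE' G S)
  refine ⟨η, fun s => h.bijective.injective (funext fun g => ?_), ?_⟩
  · rw [gammaAlg_tmul_one_mul, gammaAlg_mul_one_tmul, hη]
    obtain rfl | hg := eq_or_ne g 1
    · simp [deltaE'_one]
    · simp [deltaE'_of_ne hg]
  · rw [← gammaAlg_apply_one act, hη, deltaE'_one]

lemma algebraMap_injective (h : IsCentralizingGaloisExtension G R S act) :
    Function.Injective (algebraMap R S) := by
  have := h.faithfullyFlat
  refine (injective_iff_map_eq_zero _).mpr fun r hr => ?_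
  rw [← Module.FaithfullyFlat.one_tmul_eq_zero_iff R R (A := S), ← mul_one r, ← smul_eq_mul,
    ← TensorProduct.smul_tmul, ← Algebra.algebraMap_eq_smul_one, hr, TensorProduct.zero_tmul]

lemma isGaloisAzumayaExtension [Algebra.IsCentral R S]
    (h : IsCentralizingGaloisExtension G R S act) : IsGaloisAzumayaExtension G R S act := by
  refine ⟨h, ⟨h.algebraMap_injective, ?_⟩, h.isSeparableExtension⟩
  ext s
  rw [Subring.mem_center_iff, ← Subalgebra.mem_center_iff (R := R),
    Algebra.IsCentral.center_eq_bot, Algebra.mem_bot]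
  rfl

lemma autCongr {T : Type*} [Ring T] [Algebra R T] (h : IsCentralizingGaloisExtension G R S act)
    (e : S ≃ₐ[R] T) : IsCentralizingGaloisExtension G R T (e.autCongr.toMonoidHom.comp act) := by
  have := h.faithfullyFlat
  refine ⟨Module.FaithfullyFlat.of_linearEquiv R S e.symm.toLinearEquiv, ?_⟩
  let Φ : T ⊗[R] T ≃ₗ[R] S ⊗[R] S :=
    TensorProduct.congr e.symm.toLinearEquiv e.symm.toLinearEquiv
  let Ψ : (G → S) ≃ₗ[R] (G → T) := LinearEquiv.piCongrRight fun _ => e.toLinearEquiv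
  have hgamma : gammaAlg (e.autCongr.toMonoidHom.comp act) = Ψ ∘ₗ gammaAlg act ∘ₗ Φ := by
    ext s t g
    simp [Φ, Ψ]
  rw [hgamma]
  exact Ψ.bijective.comp (h.bijective.comp Φ.bijective)

end IsCentralizingGaloisExtension

end Galois

section Conjugation

variable (R : Type*) [CommRing R] {S : Type*} [Ring S] [Algebra R S]

/-- The inner automorphism `s ↦ u s u⁻¹` attached to a unit `u`, as a homomorphism. -/
def innerAut : Sˣ →* (S ≃ₐ[R] S) :=
  (MulSemiringAction.toAlgAut (ConjAct Sˣ) R S).comp ConjAct.toConjAct.toMonoidHom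

lemma innerAut_apply (u : Sˣ) (s : S) : innerAut R u s = u * s * ↑u⁻¹ := rfl

variable {R}

lemma innerAut_eq_of_val_eq_smul {u v : Sˣ} {c : R} (h : (v : S) = c • (u : S)) :
    innerAut R v = innerAut R u := by
  ext s
  rw [innerAut_apply, Units.mul_inv_eq_iff_eq_mul, h, innerAut_apply]
  simp [mul_assoc]

/-- The action by inner automorphisms of a group on an algebra in which it is represented
projectively, `c` being the factor set of the projective representation `u`. -/
def projectiveInnerAut {G : Type*} [Group G] (u : G → Sˣ) (c : G → G → R)
    (hu : ∀ g h, (u g * u h : S) = c g h • (u (g * h) : S)) : G →* (S ≃ₐ[R] S) :=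
  MonoidHom.mk' (fun g => innerAut R (u g)) fun g h => by
    rw [← map_mul]
    exact (innerAut_eq_of_val_eq_smul (by rw [Units.val_mul, hu])).symm

end Conjugation

section Matrix

variable {R : Type*} [CommRing R] {ι : Type*} [Fintype ι] [DecidableEq ι]

lemma sum_single_mul_mul_single (M : Matrix ι ι R) :
    ∑ i, ∑ j, single i j 1 * M * single j i 1 = M.trace • (1 : Matrix ι ι R) := by
  simp_rw [single_mul_mul_single, one_mul, mul_one]
  rw [Finset.sum_comm, trace, Finset.sum_smul]
  refine Finset.sum_congr rfl fun j _ => ?_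
  rw [sum_single_eq_diagonal, smul_one_eq_diagonal]
  rfl

variable (R ι) in
/-- The Casimir element of a matrix algebra for the trace form. -/
def matrixCasimir : Matrix ι ι R ⊗[R] Matrix ι ι R :=
  ∑ i, ∑ j, single i j 1 ⊗ₜ single j i 1

lemma gammaAlg_matrixCasimir {G : Type*} [Group G] {act : G →* (Matrix ι ι R ≃ₐ[R] Matrix ι ι R)}
    {g : G} {u : (Matrix ι ι R)ˣ} (hu : act g = innerAut R u) :
    gammaAlg act (matrixCasimir R ι) g = (u : Matrix ι ι R).trace • (↑u⁻¹ : Matrix ι ι R) := by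
  simp only [matrixCasimir, map_sum, Finset.sum_apply, gammaAlg_tmul, hu, innerAut_apply,
    ← mul_assoc, ← Finset.sum_mul, sum_single_mul_mul_single, smul_mul_assoc, one_mul]

lemma IsCentralizingGaloisExtension.of_trace_eq_zero [Nontrivial R] {G : Type*} [Group G] [Finite G]
    {act : G →* (Matrix ι ι R ≃ₐ[R] Matrix ι ι R)} (hcard : Nat.card G = Fintype.card ι ^ 2)
    (hunit : IsUnit (Fintype.card ι : R))
    (hact : ∀ g ≠ 1, ∃ u : (Matrix ι ι R)ˣ,
      act g = innerAut R u ∧ (u : Matrix ι ι R).trace = 0) :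
    IsCentralizingGaloisExtension G R (Matrix ι ι R) act := by
  obtain ⟨c, hc⟩ := hunit.exists_left_inv
  have : Nonempty ι := not_isEmpty_iff.mp fun _ => by simp at hunit
  have hη : gammaAlg act (c • matrixCasimir R ι) = deltaE' G (Matrix ι ι R) := by
    ext1 g
    rw [map_smul, Pi.smul_apply]
    obtain rfl | hg := eq_or_ne g 1
    · rw [gammaAlg_matrixCasimir (u := 1) (by simp), deltaE'_one, Units.val_one, trace_one,
        smul_smul, hc, inv_one, Units.val_one, one_smul]
    · obtain ⟨u, hu, htrace⟩ := hact g hg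
      rw [gammaAlg_matrixCasimir hu, htrace, zero_smul, smul_zero, deltaE'_of_ne hg]
  have hrank : Module.finrank R (Matrix ι ι R) = Nat.card G := by
    rw [Module.finrank_matrix, Module.finrank_self, hcard, mul_one, sq]
  exact ⟨inferInstance, gammaAlg_bijective_of_eq_deltaE' hrank hη⟩

end Matrix

section Weyl

variable {R : Type*} [CommRing R] {A : Type*} [DecidableEq A]

/-- The Weyl matrix of a character `ψ` and an element `b` of an additive group: the generalised
clock matrix `diag ψ` times the matrix of translation by `b`. -/
def weylMatrix [AddMonoid A] (ψ : AddChar A R) (b : A) : Matrix A A R :=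
  of fun i j => if i + b = j then ψ i else 0

lemma weylMatrix_apply [AddMonoid A] (ψ : AddChar A R) (b i j : A) :
    weylMatrix ψ b i j = if i + b = j then ψ i else 0 := rfl

lemma weylMatrix_one_zero [AddMonoid A] : weylMatrix (1 : AddChar A R) 0 = 1 := by
  ext i j
  simp [weylMatrix_apply, one_apply]

lemma weylMatrix_mul_weylMatrix [AddMonoid A] [Fintype A] (ψ φ : AddChar A R) (b c : A) :
    weylMatrix ψ b * weylMatrix φ c = φ b • weylMatrix (ψ * φ) (b + c) := by
  ext i j
  rw [mul_apply, Finset.sum_eq_single (i + b) (fun k _ hk => by simp [weylMatrix_apply, hk.symm])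
    (by simp)]
  simp only [weylMatrix_apply, Matrix.smul_apply, smul_eq_mul, AddChar.mul_apply,
    AddChar.map_add_eq_mul, add_assoc, if_true, mul_ite, mul_zero]
  congr 1
  ring

variable [Fintype A]

lemma trace_weylMatrix_zero [AddMonoid A] (ψ : AddChar A R) :
    (weylMatrix ψ 0).trace = ∑ i, ψ i := by
  simp [trace, weylMatrix_apply]

lemma trace_weylMatrix_of_ne_zero [AddLeftCancelMonoid A] (ψ : AddChar A R) {b : A} (hb : b ≠ 0) :
    (weylMatrix ψ b).trace = 0 := by
  simp [trace, weylMatrix_apply, hb]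

/-- The Weyl matrix as a unit, with inverse `ψ b • weylMatrix ψ⁻¹ (-b)`: Weyl matrices multiply
only up to scalars. -/
def weylUnit [AddCommGroup A] (ψ : AddChar A R) (b : A) : (Matrix A A R)ˣ where
  val := weylMatrix ψ b
  inv := ψ b • weylMatrix ψ⁻¹ (-b)
  val_inv := by
    simp [weylMatrix_mul_weylMatrix, smul_smul, ← AddChar.map_add_eq_mul, weylMatrix_one_zero,
      AddChar.inv_apply]
  inv_val := by
    simp [weylMatrix_mul_weylMatrix, smul_smul, ← AddChar.map_add_eq_mul, weylMatrix_one_zero]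

/-- The action of `A × A` on `M_A(R)` attached to an additive character `χ` of the ring `A`: the
pair `(a, b)` acts as conjugation by the Weyl matrix of the character `x ↦ χ (a x)` and of `b`. -/
def weylAction [CommRing A] (χ : AddChar A R) :
    Multiplicative (A × A) →* (Matrix A A R ≃ₐ[R] Matrix A A R) :=
  projectiveInnerAut (fun g => weylUnit (χ.mulShift g.toAdd.1) g.toAdd.2)
    (fun g h => χ.mulShift h.toAdd.1 g.toAdd.2) fun g h => by
      simp [weylUnit, weylMatrix_mul_weylMatrix, AddChar.mulShift_mul]

lemma trace_weylMatrix_mulShift [IsDomain R] [CommRing A] {χ : AddChar A R} (hχ : χ.IsPrimitive)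
    {a b : A} (hab : (a, b) ≠ 0) : (weylMatrix (χ.mulShift a) b).trace = 0 := by
  obtain rfl | hb := eq_or_ne b 0
  · have ha : a ≠ 0 := by rintro rfl; exact hab rfl
    rw [trace_weylMatrix_zero, AddChar.sum_eq_zero_of_ne_one (hχ ha)]
  · exact trace_weylMatrix_of_ne_zero _ hb

lemma weylAction_isCentralizingGaloisExtension [IsDomain R] [CommRing A] {χ : AddChar A R}
    (hχ : χ.IsPrimitive) (hunit : IsUnit (Fintype.card A : R)) :
    IsCentralizingGaloisExtension (Multiplicative (A × A)) R (Matrix A A R) (weylAction χ) :=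
  .of_trace_eq_zero (by simp [sq]) hunit
    fun _ hg => ⟨_, rfl, trace_weylMatrix_mulShift hχ hg⟩

end Weyl

theorem matrixAlgebra_isGaloisAzumaya_general {R : Type*} [CommRing R] [IsDomain R]
    {A : Type*} [CommRing A] [Fintype A] {ι : Type*} [Fintype ι] [DecidableEq ι]
    (hι : Fintype.card ι = Fintype.card A) (hunit : IsUnit (Fintype.card A : R))
    {χ : AddChar A R} (hχ : χ.IsPrimitive) :
    ∃ act : Multiplicative (A × A) →* (Matrix ι ι R ≃ₐ[R] Matrix ι ι R),
      IsGaloisAzumayaExtension (Multiplicative (A × A)) R (Matrix ι ι R) act := by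
  classical
  let e : A ≃ ι := Fintype.equivOfCardEq hι.symm
  exact ⟨_, ((weylAction_isCentralizingGaloisExtension hχ hunit).autCongr
    (reindexAlgEquiv R R e)).isGaloisAzumayaExtension⟩

/-- Let `n ≥ 2` and `F` a field whose multiplicative group contains an
element `ζ` of order `n`.  Then there is an action of `(ℤ/nℤ)²` by `F`-algebra
automorphisms on the matrix algebra `M_n(F)` making the inclusion `F → M_n(F)` (as scalar
matrices) a `(ℤ/nℤ)²`-Galois-Azumaya extension. -/
theorem matrixAlgebra_isGaloisAzumaya
    (F : Type*) [Field F] (n : ℕ) (hn : 2 ≤ n) (ζ : Fˣ) (hζ : orderOf ζ = n) :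
    letI : NeZero n := ⟨by omega⟩
    ∃ act : Multiplicative (ZMod n × ZMod n) →*
        (Matrix (Fin n) (Fin n) F ≃ₐ[F] Matrix (Fin n) (Fin n) F),
      IsGaloisAzumayaExtension (Multiplicative (ZMod n × ZMod n)) F
        (Matrix (Fin n) (Fin n) F) act := by
  have : NeZero n := ⟨by omega⟩
  have hprim : IsPrimitiveRoot (ζ : F) n := by
    rw [IsPrimitiveRoot.coe_units_iff, ← hζ]
    exact IsPrimitiveRoot.orderOf ζ
  have hnF : (n : F) ≠ 0 := hprim.neZero'.out
  exact matrixAlgebra_isGaloisAzumaya_general (by simp) (by simpa using hnF)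
    (AddChar.zmodChar_primitive_of_primitive_root n hprim)

end
end Nuss
end

section
/- Let F be a field. Let Br_Gal(F) denote the set of those classes ξ in the Brauer group Br(F) for which there exist a finite group G and a G-Galois-Azumaya extension ψ : F → S with [S] = ξ. Then Br_Gal(F) is a subgroup of Br(F): it contains the neutral class [F], is closed under the product (represented by tensor product of algebras over F), and is closed under inverses (represented by the opposite algebra). -/
open scoped TensorProduct

namespace Nuss
noncomputable section

universe u

variable (F : Type u) [Field F]

/-- A bundled `G`-Galois-Azumaya extension of the field `F`. -/
structure GaloisAzumayaAlgebra : Type (u + 1) where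
  /-- the underlying algebra -/
  carrier : Type u
  [ring : Ring carrier]
  [alg : Algebra F carrier]
  /-- the Galois group -/
  Grp : Type u
  [group : Group Grp]
  [finite : Finite Grp]
  /-- the action of the Galois group -/
  act : Grp →* (carrier ≃ₐ[F] carrier)
  /-- `F → carrier` is a `Grp`-Galois-Azumaya extension -/
  isGaloisAzumaya : IsGaloisAzumayaExtension Grp F carrier act

attribute [instance] GaloisAzumayaAlgebra.ring GaloisAzumayaAlgebra.alg
  GaloisAzumayaAlgebra.group GaloisAzumayaAlgebra.finite

/-- Brauer equivalence of two `F`-algebras: they become isomorphic after tensoring with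
(i.e. taking) matrix algebras. -/
def BrauerEquiv (A B : Type u) [Ring A] [Algebra F A] [Ring B] [Algebra F B] : Prop :=
  ∃ p q : ℕ, 0 < p ∧ 0 < q ∧
    Nonempty (Matrix (Fin p) (Fin p) A ≃ₐ[F] Matrix (Fin q) (Fin q) B)

/-- The Brauer class of `A` belongs to the Brauer–Galois group of `F`: some `G`-Galois-Azumaya
extension of `F` represents the class of `A` modulo Brauer equivalence. -/
def IsBrauerGaloisClass (A : Type u) [Ring A] [Algebra F A] : Prop :=
  ∃ W : GaloisAzumayaAlgebra F, BrauerEquiv F W.carrier A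

/-!
Galois-Azumaya extensions, over any commutative ring, are closed under opposites and tensor
products. The Galois map of `Sᵐᵒᵖ` is that of `S`, conjugated by the flip of `S ⊗ S` and the
twist `f ↦ (g ↦ g (f g⁻¹))` of `Map(G, S)`; the Galois map of `A ⊗ B` for `G × H` is the tensor
product of the two Galois maps. Casimir elements `η` of `A` and `θ` of `B` give the Casimir element
`η ⊗ θ` of `A ⊗ B`. When multiplication sends `η` and `θ` to `1`, the operator
`s ↦ ∑ xᵢ * s * yᵢ` of `η ⊗ θ` fixes the centre of `A ⊗ B`, yet it is the tensor product of the
operators of `η` and `θ`, which map into the centres `R` of `A` and `B`. Hence the centre of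
`A ⊗ B` is again `R`.
-/

section Center

variable {R S : Type*} [CommRing R] [Ring S] [Algebra R S]

theorem isCentralExtension_iff_center_le : IsCentralExtension R S ↔
    Function.Injective (algebraMap R S) ∧ Subring.center S ≤ (algebraMap R S).range := by
  have range_le : (algebraMap R S).range ≤ Subring.center S := by
    rintro _ ⟨r, rfl⟩
    exact Subring.mem_center_iff.2 fun s => (Algebra.commutes r s).symm
  exact and_congr_right fun _ => ⟨fun h => h.ge, fun h => range_le.antisymm h⟩

theorem isCentralExtension_self : IsCentralExtension R R :=
  isCentralExtension_iff_center_le.2 ⟨Function.injective_id, fun z _ => ⟨z, rfl⟩⟩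

theorem IsCentralExtension.op (h : IsCentralExtension R S) : IsCentralExtension R Sᵐᵒᵖ := by
  refine isCentralExtension_iff_center_le.2 ⟨MulOpposite.op_injective.comp h.1, fun z hz => ?_⟩
  obtain ⟨r, hr⟩ : z.unop ∈ (algebraMap R S).range :=
    h.2.ge (MulOpposite.unop_mem_center_iff.2 hz)
  exact ⟨r, MulOpposite.unop_injective hr⟩

end Center

section Casimir

variable {R S : Type*} [CommRing R] [Ring S] [Algebra R S]

/-- Casimir elements of `S ⊗[R] S`: those on which the two outer `S`-module structures agree.
They are the witnesses of separability. -/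
def IsCasimir (η : S ⊗[R] S) : Prop :=
  ∀ s : S, (s ⊗ₜ[R] (1 : S)) * η = η * ((1 : S) ⊗ₜ[R] s)

/-- The operator `s ↦ ∑ xᵢ * s * yᵢ` attached to `∑ xᵢ ⊗ yᵢ`. For a Casimir element it averages
`S` onto the centre. -/
def sandwich : S ⊗[R] S →ₗ[R] Module.End R S :=
  (AlgHom.mulLeftRight R S).toLinearMap ∘ₗ (MulOpposite.opLinearEquiv R).toLinearMap.lTensor S

@[simp]
theorem sandwich_tmul (x y s : S) : sandwich (x ⊗ₜ[R] y) s = x * s * y := by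
  simp [sandwich]

theorem sandwich_tmul_one_mul (η : S ⊗[R] S) (s t : S) :
    sandwich ((t ⊗ₜ 1) * η) s = t * sandwich η s := by
  induction η with
  | zero => simp
  | tmul x y => simp [mul_assoc]
  | add η η' h h' => simp [mul_add, h, h']

theorem sandwich_mul_one_tmul (η : S ⊗[R] S) (s t : S) :
    sandwich (η * (1 ⊗ₜ t)) s = sandwich η s * t := by
  induction η with
  | zero => simp
  | tmul x y => simp [mul_assoc]
  | add η η' h h' => simp [add_mul, h, h']

theorem sandwich_of_mem_center (η : S ⊗[R] S) {z : S} (hz : z ∈ Subring.center S) :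
    sandwich η z = z * LinearMap.mul' R S η := by
  induction η with
  | zero => simp
  | tmul x y => simp [Subring.mem_center_iff.1 hz x, mul_assoc]
  | add η η' h h' => simp [mul_add, h, h']

theorem IsCasimir.sandwich_mem_center {η : S ⊗[R] S} (hη : IsCasimir η) (s : S) :
    sandwich η s ∈ Subring.center S :=
  Subring.mem_center_iff.2 fun t => by
    rw [← sandwich_tmul_one_mul, hη t, sandwich_mul_one_tmul]

theorem IsCasimir.one_tmul_one : IsCasimir ((1 : R) ⊗ₜ[R] (1 : R)) := fun r => by
  simpa using TensorProduct.smul_tmul r (1 : R) (1 : R)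

theorem isSeparableExtension_self : IsSeparableExtension R R :=
  ⟨1 ⊗ₜ 1, IsCasimir.one_tmul_one, by simp⟩

end Casimir

section TensorProduct

variable {R A B : Type*} [CommRing R] [Ring A] [Algebra R A] [Ring B] [Algebra R B]

open Algebra.TensorProduct (tensorTensorTensorComm)

theorem IsCasimir.tensorProduct {η : A ⊗[R] A} {θ : B ⊗[R] B} (hη : IsCasimir η)
    (hθ : IsCasimir θ) :
    IsCasimir (tensorTensorTensorComm R R R R A A B B (η ⊗ₜ θ)) := by
  set e := tensorTensorTensorComm R R R R A A B B
  intro s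
  induction s with
  | zero => simp
  | tmul a b =>
    calc (a ⊗ₜ[R] b) ⊗ₜ[R] (1 : A ⊗[R] B) * e (η ⊗ₜ θ)
        = e (((a ⊗ₜ 1) * η) ⊗ₜ ((b ⊗ₜ 1) * θ)) := by
          rw [← Algebra.TensorProduct.tmul_mul_tmul, map_mul]; rfl
      _ = e ((η * (1 ⊗ₜ a)) ⊗ₜ (θ * (1 ⊗ₜ b))) := by rw [hη, hθ]
      _ = e (η ⊗ₜ θ) * ((1 : A ⊗[R] B) ⊗ₜ (a ⊗ₜ b)) := by
          rw [← Algebra.TensorProduct.tmul_mul_tmul, map_mul]; rfl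
  | add s t hs ht => rw [TensorProduct.add_tmul, TensorProduct.tmul_add, add_mul, mul_add, hs, ht]

theorem mul'_tensorTensorTensorComm_tmul (η : A ⊗[R] A) (θ : B ⊗[R] B) :
    LinearMap.mul' R (A ⊗[R] B) (tensorTensorTensorComm R R R R A A B B (η ⊗ₜ θ)) =
      LinearMap.mul' R A η ⊗ₜ LinearMap.mul' R B θ :=
  LinearMap.congr_fun TensorProduct.Algebra.mul'_comp_tensorTensorTensorComm (η ⊗ₜ θ)

theorem sandwich_tensorTensorTensorComm_tmul (η : A ⊗[R] A) (θ : B ⊗[R] B) :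
    sandwich (tensorTensorTensorComm R R R R A A B B (η ⊗ₜ θ)) =
      TensorProduct.map (sandwich η) (sandwich θ) := by
  induction η with
  | zero => simp
  | add η η' h h' => simp only [TensorProduct.add_tmul, map_add, h, h', TensorProduct.map_add_left]
  | tmul x y =>
    induction θ with
    | zero => simp
    | add θ θ' h h' =>
      simp only [TensorProduct.tmul_add, map_add, h, h', TensorProduct.map_add_right]
    | tmul x' y' => ext a b; simp

theorem map_mem_range_algebraMap {M N : Type*} [AddCommMonoid M] [Module R M] [AddCommMonoid N]
    [Module R N] {f : M →ₗ[R] A} {g : N →ₗ[R] B} (hf : ∀ m, f m ∈ (algebraMap R A).range)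
    (hg : ∀ n, g n ∈ (algebraMap R B).range) (z : M ⊗[R] N) :
    TensorProduct.map f g z ∈ (algebraMap R (A ⊗[R] B)).range := by
  induction z with
  | zero => simp [zero_mem]
  | tmul m n =>
    obtain ⟨r, hr⟩ := hf m
    obtain ⟨s, hs⟩ := hg n
    refine ⟨r * s, ?_⟩
    rw [TensorProduct.map_tmul, ← hr, ← hs, map_mul]
    simp [Algebra.TensorProduct.algebraMap_apply' (B := B) s]
  | add z w hz hw => simpa only [map_add] using add_mem hz hw

theorem IsSeparableExtension.tensorProduct (hA : IsSeparableExtension R A)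
    (hB : IsSeparableExtension R B) : IsSeparableExtension R (A ⊗[R] B) := by
  obtain ⟨η, hη, hη_one⟩ := hA
  obtain ⟨θ, hθ, hθ_one⟩ := hB
  refine ⟨_, IsCasimir.tensorProduct hη hθ, ?_⟩
  rw [mul'_tensorTensorTensorComm_tmul, hη_one, hθ_one, Algebra.TensorProduct.one_def]

theorem IsCentralExtension.tensorProduct [Module.Flat R A] (hA : IsCentralExtension R A)
    (hB : IsCentralExtension R B) (hA_sep : IsSeparableExtension R A)
    (hB_sep : IsSeparableExtension R B) : IsCentralExtension R (A ⊗[R] B) := by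
  obtain ⟨η, hη, hη_one⟩ := hA_sep
  obtain ⟨θ, hθ, hθ_one⟩ := hB_sep
  refine isCentralExtension_iff_center_le.2
    ⟨(Algebra.TensorProduct.includeLeft_injective (S := R) hB.1).comp hA.1, fun z hz => ?_⟩
  have average_eq : TensorProduct.map (sandwich η) (sandwich θ) z = z := by
    rw [← sandwich_tensorTensorTensorComm_tmul, sandwich_of_mem_center _ hz,
      mul'_tensorTensorTensorComm_tmul, hη_one, hθ_one, ← Algebra.TensorProduct.one_def, mul_one]
  rw [← average_eq]
  exact map_mem_range_algebraMap
    (fun a => hA.2.ge (IsCasimir.sandwich_mem_center hη a))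
    (fun b => hB.2.ge (IsCasimir.sandwich_mem_center hθ b)) z

end TensorProduct

section FunctionSpaces

variable (R M N G H : Type*) [CommSemiring R] [AddCommMonoid M] [Module R M]
  [AddCommMonoid N] [Module R N]

/-- The canonical map `Map(G, M) ⊗ Map(H, N) → Map(G × H, M ⊗ N)`, the external product of
functions. It compares the target of the Galois map of a tensor product with the targets of the
two factors. -/
def funTensorFun : (G → M) ⊗[R] (H → N) →ₗ[R] (G × H → M ⊗[R] N) :=
  TensorProduct.lift <| LinearMap.mk₂ R (fun f f' g => f g.1 ⊗ₜ f' g.2)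
    (fun _ _ _ => funext fun _ => TensorProduct.add_tmul _ _ _)
    (fun _ _ _ => rfl)
    (fun _ _ _ => funext fun _ => TensorProduct.tmul_add _ _ _)
    (fun _ _ _ => funext fun _ => TensorProduct.tmul_smul _ _ _)

variable {R M N G H} in
@[simp]
theorem funTensorFun_tmul (f : G → M) (f' : H → N) :
    funTensorFun R M N G H (f ⊗ₜ f') = fun g => f g.1 ⊗ₜ f' g.2 := rfl

theorem bijective_funTensorFun [Finite G] [Finite H] :
    Function.Bijective (funTensorFun R M N G H) := by
  classical
  have := Fintype.ofFinite G
  have := Fintype.ofFinite H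
  let e : (G → M) ⊗[R] (H → N) ≃ₗ[R] (G × H → M ⊗[R] N) :=
    TensorProduct.piLeft R (H → N) (fun _ : G => M) ≪≫ₗ
      .piCongrRight (fun _ => TensorProduct.piRight R R M (fun _ : H => N)) ≪≫ₗ
      (LinearEquiv.curry R (M ⊗[R] N) G H).symm
  have he : funTensorFun R M N G H = e :=
    TensorProduct.ext' fun f f' => by ext ⟨g, h⟩; simp [e]
  rw [he]
  exact e.bijective

end FunctionSpaces

section GaloisMap

theorem bijective_gammaAlg_self {R G : Type*} [CommRing R] [Group G] [Unique G]
    (act : G →* (R ≃ₐ[R] R)) : Function.Bijective (gammaAlg act) := by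
  let e := TensorProduct.lid R R ≪≫ₗ (LinearEquiv.funUnique G R R).symm
  have he : gammaAlg act = e := TensorProduct.ext' fun a b => by
    ext g
    simp [e, show act g b = b from (act g).commutes b]
  rw [he]
  exact e.bijective

section Op

variable {R S G : Type*} [CommRing R] [Ring S] [Algebra R S] [Group G]

open MulOpposite

/-- The action on `Sᵐᵒᵖ` with the same underlying permutations as `act`. -/
def opAction (act : G →* (S ≃ₐ[R] S)) : G →* (Sᵐᵒᵖ ≃ₐ[R] Sᵐᵒᵖ) where
  toFun g := AlgEquiv.op (act g)
  map_one' := by ext; simp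
  map_mul' g h := by ext; simp

variable (R S) in
/-- The isomorphism `x ⊗ y ↦ op y ⊗ op x`. Exchanging the two factors makes it an
anti-isomorphism of algebras, compatible with multiplication. -/
def opFlip : S ⊗[R] S ≃ₗ[R] Sᵐᵒᵖ ⊗[R] Sᵐᵒᵖ :=
  TensorProduct.comm R S S ≪≫ₗ TensorProduct.congr (opLinearEquiv R) (opLinearEquiv R)

@[simp]
theorem opFlip_tmul (x y : S) : opFlip R S (x ⊗ₜ y) = op y ⊗ₜ op x := rfl

theorem opFlip_mul (η θ : S ⊗[R] S) : opFlip R S (η * θ) = opFlip R S θ * opFlip R S η := by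
  induction η with
  | zero => simp
  | add η η' h h' => simp only [add_mul, mul_add, map_add, h, h']
  | tmul x y =>
    induction θ with
    | zero => simp
    | add θ θ' h h' => simp only [add_mul, mul_add, map_add, h, h']
    | tmul x' y' => simp

theorem mul'_opFlip (η : S ⊗[R] S) :
    LinearMap.mul' R Sᵐᵒᵖ (opFlip R S η) = op (LinearMap.mul' R S η) := by
  induction η with
  | zero => simp
  | tmul x y => simp
  | add η η' h h' => simp only [map_add, op_add, h, h']

theorem IsCasimir.op {η : S ⊗[R] S} (hη : IsCasimir η) : IsCasimir (opFlip R S η) := fun s =>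
  calc (s ⊗ₜ 1) * opFlip R S η = opFlip R S (η * (1 ⊗ₜ unop s)) := by simp [opFlip_mul]
    _ = opFlip R S ((unop s ⊗ₜ 1) * η) := by rw [hη]
    _ = opFlip R S η * (1 ⊗ₜ s) := by simp [opFlip_mul]

theorem IsSeparableExtension.op (h : IsSeparableExtension R S) : IsSeparableExtension R Sᵐᵒᵖ := by
  obtain ⟨η, hη, hη_one⟩ := h
  exact ⟨opFlip R S η, IsCasimir.op hη, by rw [mul'_opFlip, hη_one, op_one]⟩

/-- The isomorphism `Map(G, S) ≃ Map(G, Sᵐᵒᵖ)` sending `f` to `g ↦ op (g (f g⁻¹))`, which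
intertwines the Galois maps of `S` and `Sᵐᵒᵖ`. -/
def opTwist (act : G →* (S ≃ₐ[R] S)) : (G → S) ≃ₗ[R] (G → Sᵐᵒᵖ) :=
  LinearEquiv.funCongrLeft R S (Equiv.inv G) ≪≫ₗ
    .piCongrRight fun g => (act g).toLinearEquiv ≪≫ₗ opLinearEquiv R

/-- The value at `g` of the left side on `s ⊗ t` is `op (g(s) * t) = op (g (s * g⁻¹(t)))`. -/
theorem gammaAlg_opAction_comp_opFlip (act : G →* (S ≃ₐ[R] S)) :
    gammaAlg (opAction act) ∘ₗ (opFlip R S).toLinearMap =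
      (opTwist act).toLinearMap ∘ₗ gammaAlg act :=
  TensorProduct.ext' fun s t => by
    ext g
    simp [opTwist, opAction, LinearEquiv.funCongrLeft_apply]

theorem bijective_gammaAlg_opAction {act : G →* (S ≃ₐ[R] S)}
    (h : Function.Bijective (gammaAlg act)) : Function.Bijective (gammaAlg (opAction act)) := by
  rw [← Function.Bijective.of_comp_iff _ (opFlip R S).bijective]
  change Function.Bijective (gammaAlg (opAction act) ∘ₗ (opFlip R S).toLinearMap)
  rw [gammaAlg_opAction_comp_opFlip]
  exact (opTwist act).bijective.comp h

end Op

section TensorProduct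

variable {R A B G H : Type*} [CommRing R] [Ring A] [Algebra R A] [Ring B] [Algebra R B]
  [Group G] [Group H]

/-- The factorwise action of `G × H` on `A ⊗ B`. -/
def tensorAction (actA : G →* (A ≃ₐ[R] A)) (actB : H →* (B ≃ₐ[R] B)) :
    G × H →* (A ⊗[R] B ≃ₐ[R] A ⊗[R] B) where
  toFun g := Algebra.TensorProduct.congr (actA g.1) (actB g.2)
  map_one' := by
    rw [Prod.fst_one, Prod.snd_one, map_one, map_one]
    exact Algebra.TensorProduct.congr_refl
  map_mul' g h := by
    rw [Prod.fst_mul, Prod.snd_mul, map_mul, map_mul]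
    exact Algebra.TensorProduct.congr_trans _ _ _ _

theorem gammaAlg_tensorAction (actA : G →* (A ≃ₐ[R] A)) (actB : H →* (B ≃ₐ[R] B)) :
    gammaAlg (tensorAction actA actB) =
      funTensorFun R A B G H ∘ₗ TensorProduct.map (gammaAlg actA) (gammaAlg actB) ∘ₗ
        (TensorProduct.tensorTensorTensorComm R A B A B).toLinearMap := by
  ext a b a' b' g
  simp [tensorAction]

theorem bijective_gammaAlg_tensorAction [Finite G] [Finite H] {actA : G →* (A ≃ₐ[R] A)}
    {actB : H →* (B ≃ₐ[R] B)} (hA : Function.Bijective (gammaAlg actA))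
    (hB : Function.Bijective (gammaAlg actB)) :
    Function.Bijective (gammaAlg (tensorAction actA actB)) := by
  rw [gammaAlg_tensorAction]
  exact (bijective_funTensorFun R A B G H).comp
    ((TensorProduct.map_bijective hA hB).comp (LinearEquiv.bijective _))

end TensorProduct

end GaloisMap

theorem faithfullyFlat_tensorProduct {R M N : Type*} [CommRing R] [AddCommGroup M] [Module R M]
    [AddCommGroup N] [Module R N] [Module.FaithfullyFlat R M] [Module.FaithfullyFlat R N] :
    Module.FaithfullyFlat R (M ⊗[R] N) := by
  refine (Module.FaithfullyFlat.iff_flat_and_lTensor_faithful R _).2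
    ⟨inferInstance, fun P _ _ _ => ?_⟩
  have : Nontrivial (M ⊗[R] (N ⊗[R] P)) := inferInstance
  exact (TensorProduct.assoc R M N P).toEquiv.nontrivial

section GaloisAzumaya

variable {R : Type*} [CommRing R]

theorem isGaloisAzumayaExtension_self {G : Type*} [Group G] [Unique G] (act : G →* (R ≃ₐ[R] R)) :
    IsGaloisAzumayaExtension G R R act :=
  ⟨⟨inferInstance, bijective_gammaAlg_self act⟩, isCentralExtension_self,
    isSeparableExtension_self⟩

theorem IsGaloisAzumayaExtension.op {S G : Type*} [Ring S] [Algebra R S] [Group G] [Finite G]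
    {act : G →* (S ≃ₐ[R] S)} (h : IsGaloisAzumayaExtension G R S act) :
    IsGaloisAzumayaExtension G R Sᵐᵒᵖ (opAction act) := by
  obtain ⟨⟨_, galois⟩, central, separable⟩ := h
  exact ⟨⟨.of_linearEquiv R S (MulOpposite.opLinearEquiv R).symm,
    bijective_gammaAlg_opAction galois⟩, central.op, separable.op⟩

theorem IsGaloisAzumayaExtension.tensorProduct {A B G H : Type*} [Ring A] [Algebra R A] [Ring B]
    [Algebra R B] [Group G] [Finite G] [Group H] [Finite H] {actA : G →* (A ≃ₐ[R] A)}
    {actB : H →* (B ≃ₐ[R] B)} (hA : IsGaloisAzumayaExtension G R A actA)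
    (hB : IsGaloisAzumayaExtension H R B actB) :
    IsGaloisAzumayaExtension (G × H) R (A ⊗[R] B) (tensorAction actA actB) := by
  obtain ⟨⟨_, galoisA⟩, centralA, separableA⟩ := hA
  obtain ⟨⟨_, galoisB⟩, centralB, separableB⟩ := hB
  exact ⟨⟨faithfullyFlat_tensorProduct, bijective_gammaAlg_tensorAction galoisA galoisB⟩,
    centralA.tensorProduct centralB separableA separableB, separableA.tensorProduct separableB⟩

end GaloisAzumaya

/-- The Kronecker product of matrices as an isomorphism `Mₘ(A) ⊗ Mₙ(B) ≃ Mₘₙ(A ⊗ B)`, with the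
rows and columns of the target indexed by `Fin (m * n)` rather than by pairs. -/
def kroneckerFinAlgEquiv (R A B : Type*) [CommSemiring R] [Semiring A] [Algebra R A] [Semiring B]
    [Algebra R B] (m n : ℕ) :
    Matrix (Fin m) (Fin m) A ⊗[R] Matrix (Fin n) (Fin n) B ≃ₐ[R]
      Matrix (Fin (m * n)) (Fin (m * n)) (A ⊗[R] B) :=
  (Matrix.kroneckerTMulAlgEquiv (Fin m) (Fin n) R R A B).trans
    (Matrix.reindexAlgEquiv R (A ⊗[R] B) finProdFinEquiv)

section BrauerClasses

variable {F} {A B C D : Type u} [Ring A] [Algebra F A] [Ring B] [Algebra F B]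
  [Ring C] [Algebra F C] [Ring D] [Algebra F D]

theorem BrauerEquiv.refl : BrauerEquiv F A A :=
  ⟨1, 1, one_pos, one_pos, ⟨.refl⟩⟩

theorem BrauerEquiv.op (h : BrauerEquiv F A B) : BrauerEquiv F Aᵐᵒᵖ Bᵐᵒᵖ := by
  obtain ⟨p, q, hp, hq, ⟨e⟩⟩ := h
  exact ⟨p, q, hp, hq, ⟨AlgEquiv.mopMatrix.trans ((AlgEquiv.op e).trans AlgEquiv.mopMatrix.symm)⟩⟩

theorem BrauerEquiv.tensorProduct (h : BrauerEquiv F A B) (h' : BrauerEquiv F C D) :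
    BrauerEquiv F (A ⊗[F] C) (B ⊗[F] D) := by
  obtain ⟨p, q, hp, hq, ⟨e⟩⟩ := h
  obtain ⟨p', q', hp', hq', ⟨e'⟩⟩ := h'
  exact ⟨p * p', q * q', Nat.mul_pos hp hp', Nat.mul_pos hq hq',
    ⟨(kroneckerFinAlgEquiv F A C p p').symm.trans
      ((Algebra.TensorProduct.congr e e').trans (kroneckerFinAlgEquiv F B D q q'))⟩⟩

theorem isBrauerGaloisClass_self : IsBrauerGaloisClass F F :=
  ⟨⟨F, PUnit, 1, isGaloisAzumayaExtension_self 1⟩, .refl⟩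

theorem IsBrauerGaloisClass.tensorProduct (hA : IsBrauerGaloisClass F A)
    (hB : IsBrauerGaloisClass F B) : IsBrauerGaloisClass F (A ⊗[F] B) := by
  obtain ⟨V, hV⟩ := hA
  obtain ⟨W, hW⟩ := hB
  exact ⟨⟨V.carrier ⊗[F] W.carrier, V.Grp × W.Grp, tensorAction V.act W.act,
    V.isGaloisAzumaya.tensorProduct W.isGaloisAzumaya⟩, hV.tensorProduct hW⟩

theorem IsBrauerGaloisClass.op (hA : IsBrauerGaloisClass F A) : IsBrauerGaloisClass F Aᵐᵒᵖ := by
  obtain ⟨W, hW⟩ := hA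
  exact ⟨⟨W.carrierᵐᵒᵖ, W.Grp, opAction W.act, W.isGaloisAzumaya.op⟩, hW.op⟩

end BrauerClasses

/-- The set `Br_Gal(F)` of Brauer classes of `F` represented (modulo
Brauer equivalence) by Galois-Azumaya extensions of `F` is a subgroup of the Brauer group
`Br(F)`: it contains the neutral class `[F]`, is closed under the product (represented by
the tensor product of algebras over `F`), and is closed under inverses (represented by the
opposite algebra). -/
theorem brauerGalois_subgroup (F : Type u) [Field F] :
    IsBrauerGaloisClass F F ∧
    (∀ (A B : Type u) [Ring A] [Algebra F A] [Ring B] [Algebra F B],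
      IsBrauerGaloisClass F A → IsBrauerGaloisClass F B →
        IsBrauerGaloisClass F (A ⊗[F] B)) ∧
    (∀ (A : Type u) [Ring A] [Algebra F A],
      IsBrauerGaloisClass F A → IsBrauerGaloisClass F Aᵐᵒᵖ) :=
  ⟨isBrauerGaloisClass_self, fun _ _ _ _ _ _ hA hB => hA.tensorProduct hB,
    fun _ _ _ hA => hA.op⟩

end
end Nuss
end
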